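/- Let δ > 0, 0 < a < 1, γ > 0, assume p ≥ 2, and let Pen : 𝓜 → ℝ satisfy Pen(M) ≥ (4σ²(δ+1)/(a ν_r²)) ‖Ψ_M‖_F² ln p for every M ∈ 𝓜. Let M̂ be any minimizer over the restricted collection 𝓜_γ = {M ∈ 𝓜 : ‖Ψ_M‖_F² ≤ γ² n} of ‖z − f̂_M‖² + Pen(M). Then E‖f̂_{M̂} − f‖² ≤ ((1+a)/(1−a)) · min_{M ∈ 𝓜_γ} { ‖f_M − f‖² + (3/(2(1+a))) Pen(M) } + (4 γ² σ²/(a(1−a) ν_r²)) · n p^{−δ}. -/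

import Mathlib

open MeasureTheory ProbabilityTheory Matrix Finset

noncomputable section

/-- Squared Euclidean norm of a vector in `ℝ^k`. -/
def sqnorm {k : ℕ} (v : Fin k → ℝ) : ℝ := ∑ i, v i ^ 2

/-- Euclidean inner product on `ℝ^k`. -/
def ip {k : ℕ} (u v : Fin k → ℝ) : ℝ := ∑ i, u i * v i

/-- The `j`-th column of a matrix. -/
def colv {a b : ℕ} (B : Matrix (Fin a) (Fin b) ℝ) (j : Fin b) : Fin a → ℝ := fun i => B i j

/-- The matrix `B_M`: the columns of `B` outside `M` are replaced by zero. -/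
def restr {a b : ℕ} (B : Matrix (Fin a) (Fin b) ℝ) (M : Finset (Fin b)) :
    Matrix (Fin a) (Fin b) ℝ := fun i j => if j ∈ M then B i j else 0

/-- Squared Frobenius norm of a matrix. -/
def frob2 {a b : ℕ} (B : Matrix (Fin a) (Fin b) ℝ) : ℝ := ∑ j, sqnorm (colv B j)

/-- `x` has at most `r` nonzero coordinates. -/
def sparse {k : ℕ} (r : ℕ) (x : Fin k → ℝ) : Prop := (Function.support x).ncard ≤ r

/-- `H` is the orthogonal projection matrix of `ℝ^m` onto `span{φ_j : j ∈ M}`: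
symmetric, idempotent, with range equal to the span of the columns of `Φ` indexed by `M`. -/
def IsProjOnto {m p : ℕ} (Φ : Matrix (Fin m) (Fin p) ℝ) (M : Finset (Fin p))
    (H : Matrix (Fin m) (Fin m) ℝ) : Prop :=
  H.IsSymm ∧ H * H = H ∧
    LinearMap.range H.mulVecLin = Submodule.span ℝ (colv Φ '' (M : Set (Fin p)))

/-- `Ψ = A (AᵀA)⁻¹ Φ`. -/
def Psi {n m p : ℕ} (A : Matrix (Fin n) (Fin m) ℝ) (Φ : Matrix (Fin m) (Fin p) ℝ) :
    Matrix (Fin n) (Fin p) ℝ := A * (Aᵀ * A)⁻¹ * Φ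

/-- `z = (AᵀA)⁻¹ Aᵀ y` where `y = A f + σ e`. -/
def zv {n m : ℕ} (A : Matrix (Fin n) (Fin m) ℝ) (f : Fin m → ℝ) (σ : ℝ) (e : Fin n → ℝ) :
    Fin m → ℝ := ((Aᵀ * A)⁻¹ * Aᵀ).mulVec (A.mulVec f + σ • e)

/-- `ξ = (AᵀA)⁻¹ Aᵀ e`. -/
def xiv {n m : ℕ} (A : Matrix (Fin n) (Fin m) ℝ) (e : Fin n → ℝ) : Fin m → ℝ :=
  ((Aᵀ * A)⁻¹ * Aᵀ).mulVec e

/-- The collection `𝓜` of models of size at most `r/2`. -/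
def models (p r : ℕ) : Finset (Finset (Fin p)) := Finset.univ.filter fun M => 2 * M.card ≤ r

open scoped Classical in
/-- The restricted collection `𝓜_γ = {M ∈ 𝓜 : ‖Ψ_M‖_F² ≤ γ²n}`. -/
def modelsG {n m p : ℕ} (r : ℕ) (A : Matrix (Fin n) (Fin m) ℝ) (Φ : Matrix (Fin m) (Fin p) ℝ)
    (γ : ℝ) : Finset (Finset (Fin p)) :=
  Finset.univ.filter fun M => 2 * M.card ≤ r ∧ frob2 (restr (Psi A Φ) M) ≤ γ ^ 2 * (n : ℝ)

/-- The aggregated estimator `f̂_θ = ∑_{M ∈ C} θ_M f̂_M`, where `f̂_M = H_M z`. -/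
def aggEst {m p : ℕ} (C : Finset (Finset (Fin p)))
    (H : Finset (Fin p) → Matrix (Fin m) (Fin m) ℝ) (zvec : Fin m → ℝ)
    (θ : Finset (Fin p) → ℝ) : Fin m → ℝ :=
  ∑ M ∈ C, θ M • (H M).mulVec zvec

/-- The penalty `U_M = 4σ²(δ+1)ν_r⁻² ‖Ψ_M‖_F² ln p`. -/
def Ufun {n m p : ℕ} (A : Matrix (Fin n) (Fin m) ℝ) (Φ : Matrix (Fin m) (Fin p) ℝ)
    (σ δ ν2 : ℝ) (M : Finset (Fin p)) : ℝ :=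
  4 * σ ^ 2 * (δ + 1) / ν2 * frob2 (restr (Psi A Φ) M) * Real.log p

/-- The Q-aggregation criterion (with `α = 1/2`, multiplied by 2):
`∑_M θ_M (‖z - f̂_M‖² + 2U_M) + ‖z - f̂_θ‖²`. -/
def aggCrit {m p : ℕ} (C : Finset (Finset (Fin p)))
    (H : Finset (Fin p) → Matrix (Fin m) (Fin m) ℝ) (zvec : Fin m → ℝ)
    (U : Finset (Fin p) → ℝ) (θ : Finset (Fin p) → ℝ) : ℝ :=
  ∑ M ∈ C, θ M * (sqnorm (zvec - (H M).mulVec zvec) + 2 * U M) +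
    sqnorm (zvec - aggEst C H zvec θ)

/-!
Minimality of `M̂` gives, for any competitor `M`, a basic inequality whose noise term is
`2⟨z - f, f̂_M̂ - f_M⟩`. The vector `f̂_M̂ - f_M` is `Φx` with `x` supported on `M̂ ∪ M`, hence
`r`-sparse, so Young's inequality and `ν_r² ‖x‖² ≤ ‖Φx‖²` bound the noise by a fraction of the two
losses plus `2 / (a ν_r²)` times the sum of the squares `⟨z - f, φ_j⟩²` over `M̂` and `M`.

Each `⟨z - f, φ_j⟩` is centred Gaussian of variance `v_j = σ² ‖ψ_j‖²`. With `T = 2(δ + 1) ln p`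
the penalty of `M̂` pays for `T v_j` at every `j ∈ M̂`. There remains the excess of `⟨z - f, φ_j⟩²`
over `T v_j`, which may be summed over all `j` occurring in some model: this removes the dependence
on the random `M̂`, and each of the at most `p` terms has expectation at most
`(3/2) v_j exp (-T / 2)`, whence the factor `p ^ (-δ)`. The squares over the fixed `M` have
expectation `∑ v_j`, which half of `Pen M` covers up to a term of the same order.
-/

section GaussianMoments

open Filter Topology

lemma hasDerivAt_sub_two_sub_sq_mul_exp (T x : ℝ) :
    HasDerivAt (fun y : ℝ => (T - 2 - y ^ 2) * Real.exp (-(y ^ 2 / 2)))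
      (x * (x ^ 2 - T) * Real.exp (-(x ^ 2 / 2))) x := by
  have hpoly : HasDerivAt (fun y : ℝ => (T - 2 - y ^ 2)) (-(2 * x)) x := by
    simpa using (hasDerivAt_pow 2 x).const_sub (T - 2)
  have hexp : HasDerivAt (fun y : ℝ => Real.exp (-(y ^ 2 / 2)))
      (Real.exp (-(x ^ 2 / 2)) * -(2 * x / 2)) x := by
    simpa using ((hasDerivAt_pow 2 x).div_const 2).neg.exp
  exact (hpoly.mul hexp).congr_deriv (by ring)

lemma tendsto_sub_two_sub_sq_mul_exp_atTop (T : ℝ) :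
    Tendsto (fun y : ℝ => (T - 2 - y ^ 2) * Real.exp (-(y ^ 2 / 2))) atTop (𝓝 0) := by
  have hsq : Tendsto (fun y : ℝ => y ^ 2 / 2) atTop atTop :=
    (tendsto_pow_atTop two_ne_zero).atTop_div_const two_pos
  have hlin := (Real.tendsto_pow_mul_exp_neg_atTop_nhds_zero 1).comp hsq
  have hexp := (Real.tendsto_pow_mul_exp_neg_atTop_nhds_zero 0).comp hsq
  have hsum := (hlin.const_mul (-2)).add (hexp.const_mul (T - 2))
  simp only [mul_zero, add_zero] at hsum
  exact hsum.congr fun y => by simp only [Function.comp_apply]; ring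

lemma mul_sq_sub_mul_exp_nonneg {T x : ℝ} (hx : x ∈ Set.Ioi √T) :
    0 ≤ x * (x ^ 2 - T) * Real.exp (-(x ^ 2 / 2)) := by
  have hx0 : 0 < x := (Real.sqrt_nonneg T).trans_lt hx
  have hTx : T < x ^ 2 := (Real.sqrt_lt' hx0).1 hx
  exact mul_nonneg (mul_nonneg hx0.le (sub_nonneg.2 hTx.le)) (Real.exp_pos _).le

lemma integrableOn_mul_sq_sub_mul_exp (T : ℝ) :
    IntegrableOn (fun x : ℝ => x * (x ^ 2 - T) * Real.exp (-(x ^ 2 / 2))) (Set.Ioi √T) :=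
  integrableOn_Ioi_deriv_of_nonneg' (fun x _ => hasDerivAt_sub_two_sub_sq_mul_exp T x)
    (fun _ => mul_sq_sub_mul_exp_nonneg) (tendsto_sub_two_sub_sq_mul_exp_atTop T)

lemma integral_mul_sq_sub_mul_exp {T : ℝ} (hT : 0 ≤ T) :
    ∫ x in Set.Ioi √T, x * (x ^ 2 - T) * Real.exp (-(x ^ 2 / 2)) = 2 * Real.exp (-(T / 2)) := by
  rw [integral_Ioi_of_hasDerivAt_of_nonneg'
    (fun x _ => hasDerivAt_sub_two_sub_sq_mul_exp T x)
    (fun _ => mul_sq_sub_mul_exp_nonneg) (tendsto_sub_two_sub_sq_mul_exp_atTop T),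
    Real.sq_sqrt hT]
  ring

lemma integral_Ioi_max_sq_sub_mul_exp_le {T : ℝ} (hT : 0 < T) :
    ∫ x in Set.Ioi (0 : ℝ), max (x ^ 2 - T) 0 * Real.exp (-(x ^ 2 / 2)) ≤
      2 / √T * Real.exp (-(T / 2)) := by
  have hsqrt : 0 < √T := Real.sqrt_pos.2 hT
  have hvanish : ∀ x ∈ Set.Ioi (0 : ℝ) \ Set.Ioi √T,
      max (x ^ 2 - T) 0 * Real.exp (-(x ^ 2 / 2)) = 0 := by
    rintro x ⟨hx0, hx⟩
    have hxT : x ^ 2 ≤ T := (Real.le_sqrt' hx0).1 (not_lt.1 hx)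
    rw [max_eq_right (sub_nonpos.2 hxT), zero_mul]
  -- Past `√T` the factor `x / √T` is at least `1`, and it makes the integrand an exact derivative.
  have hbound : ∀ x ∈ Set.Ioi √T, max (x ^ 2 - T) 0 * Real.exp (-(x ^ 2 / 2)) ≤
      (√T)⁻¹ * (x * (x ^ 2 - T) * Real.exp (-(x ^ 2 / 2))) := by
    intro x hx
    have hTx : T ≤ x ^ 2 := ((Real.sqrt_lt' (hsqrt.trans hx)).1 hx).le
    have hone : 1 ≤ (√T)⁻¹ * x := by
      rw [inv_mul_eq_div, one_le_div hsqrt]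
      exact (Set.mem_Ioi.1 hx).le
    rw [max_eq_left (sub_nonneg.2 hTx), ← mul_assoc, ← mul_assoc]
    gcongr
    exact le_mul_of_one_le_left (sub_nonneg.2 hTx) hone
  calc ∫ x in Set.Ioi (0 : ℝ), max (x ^ 2 - T) 0 * Real.exp (-(x ^ 2 / 2))
      = ∫ x in Set.Ioi √T, max (x ^ 2 - T) 0 * Real.exp (-(x ^ 2 / 2)) :=
        setIntegral_eq_of_subset_of_forall_sdiff_eq_zero measurableSet_Ioi
          (Set.Ioi_subset_Ioi hsqrt.le) hvanish
    _ ≤ ∫ x in Set.Ioi √T, (√T)⁻¹ * (x * (x ^ 2 - T) * Real.exp (-(x ^ 2 / 2))) :=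
        integral_mono_of_nonneg (ae_of_all _ fun x => by positivity)
          ((integrableOn_mul_sq_sub_mul_exp T).const_mul _)
          (ae_restrict_of_forall_mem measurableSet_Ioi hbound)
    _ = 2 / √T * Real.exp (-(T / 2)) := by
        rw [integral_const_mul, integral_mul_sq_sub_mul_exp hT.le]
        ring

lemma integral_max_sq_sub_gaussianReal_zero_one_le {T : ℝ} (hT : 0 < T) :
    ∫ x, max (x ^ 2 - T) 0 ∂gaussianReal 0 1 ≤ 4 / √(2 * Real.pi * T) * Real.exp (-(T / 2)) := by
  have hdensity (x : ℝ) : gaussianPDFReal 0 1 x • max (x ^ 2 - T) 0 =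
      (√(2 * Real.pi))⁻¹ * (max (|x| ^ 2 - T) 0 * Real.exp (-(|x| ^ 2 / 2))) := by
    simp only [gaussianPDFReal_def, NNReal.coe_one, mul_one, sub_zero, sq_abs, smul_eq_mul, neg_div]
    ring
  calc ∫ x, max (x ^ 2 - T) 0 ∂gaussianReal 0 1
      = (√(2 * Real.pi))⁻¹ *
          (2 * ∫ x in Set.Ioi (0 : ℝ), max (x ^ 2 - T) 0 * Real.exp (-(x ^ 2 / 2))) := by
        rw [integral_gaussianReal_eq_integral_smul one_ne_zero]
        simp only [hdensity]
        rw [integral_const_mul,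
          integral_comp_abs (f := fun x : ℝ => max (x ^ 2 - T) 0 * Real.exp (-(x ^ 2 / 2)))]
    _ ≤ (√(2 * Real.pi))⁻¹ * (2 * (2 / √T * Real.exp (-(T / 2)))) := by
        gcongr
        exact integral_Ioi_max_sq_sub_mul_exp_le hT
    _ = 4 / √(2 * Real.pi * T) * Real.exp (-(T / 2)) := by
        rw [Real.sqrt_mul (by positivity : 0 ≤ 2 * Real.pi)]
        field_simp
        norm_num

variable {Ω : Type*} [MeasurableSpace Ω] {μ : Measure Ω} {X : Ω → ℝ} {v : NNReal}

lemma integrable_sq_of_hasLaw_gaussianReal (hX : HasLaw X (gaussianReal 0 v) μ) :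
    Integrable (fun ω => X ω ^ 2) μ := by
  have hid : MemLp id 2 (μ.map X) := hX.map_eq ▸ memLp_id_gaussianReal 2
  exact ((memLp_map_measure_iff hid.1 hX.aemeasurable).1 hid).integrable_sq

lemma integral_sq_of_hasLaw_gaussianReal (hX : HasLaw X (gaussianReal 0 v) μ) :
    ∫ ω, X ω ^ 2 ∂μ = v := by
  have hmean : ∫ ω, X ω ∂μ = 0 := by rw [hX.integral_eq, integral_id_gaussianReal]
  rw [← variance_of_integral_eq_zero hX.aemeasurable hmean, hX.variance_eq,
    variance_id_gaussianReal]

lemma gaussianReal_zero_eq_map_sqrt_mul (v : NNReal) :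
    gaussianReal 0 v = (gaussianReal 0 1).map (√(v : ℝ) * ·) := by
  rw [gaussianReal_map_const_mul]
  congr 1
  · simp
  · ext; simp

lemma integral_max_sq_sub_of_hasLaw_gaussianReal_le (hX : HasLaw X (gaussianReal 0 v) μ)
    {T : ℝ} (hT : 0 < T) :
    ∫ ω, max (X ω ^ 2 - v * T) 0 ∂μ ≤ v * (4 / √(2 * Real.pi * T) * Real.exp (-(T / 2))) := by
  have hscale (x : ℝ) : max ((√(v : ℝ) * x) ^ 2 - v * T) 0 = v * max (x ^ 2 - T) 0 := by
    rw [mul_pow, Real.sq_sqrt v.coe_nonneg, mul_max_of_nonneg _ _ v.coe_nonneg, mul_sub, mul_zero]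
  calc ∫ ω, max (X ω ^ 2 - v * T) 0 ∂μ
      = ∫ x, max (x ^ 2 - v * T) 0 ∂gaussianReal 0 v :=
        hX.integral_comp (f := fun x => max (x ^ 2 - v * T) 0) (by fun_prop)
    _ = v * ∫ x, max (x ^ 2 - T) 0 ∂gaussianReal 0 1 := by
        rw [gaussianReal_zero_eq_map_sqrt_mul, integral_map (by fun_prop) (by fun_prop)]
        simp only [hscale, integral_const_mul]
    _ ≤ v * (4 / √(2 * Real.pi * T) * Real.exp (-(T / 2))) := by
        gcongr
        exact integral_max_sq_sub_gaussianReal_zero_one_le hT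

lemma hasLaw_dotProduct_of_hasLaw_pi_gaussianReal {ι : Type*} [Fintype ι] {ε : Ω → ι → ℝ}
    (hε : HasLaw ε (Measure.pi fun _ => gaussianReal 0 1) μ) (w : ι → ℝ) :
    HasLaw (fun ω => w ⬝ᵥ ε ω) (gaussianReal 0 (w ⬝ᵥ w).toNNReal) μ := by
  have hstd : HasLaw (fun ω => WithLp.toLp 2 (ε ω)) (stdGaussian (EuclideanSpace ℝ ι)) μ :=
    HasLaw.comp ⟨by fun_prop, map_pi_eq_stdGaussian⟩ hε
  set L : StrongDual ℝ (EuclideanSpace ℝ ι) := innerSL ℝ (WithLp.toLp 2 w)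
  have hnorm : ‖L‖ ^ 2 = w ⬝ᵥ w := by
    rw [innerSL_apply_norm, ← real_inner_self_eq_norm_sq, EuclideanSpace.inner_toLp_toLp]
    simp
  have hL : HasLaw L (gaussianReal 0 (w ⬝ᵥ w).toNNReal) (stdGaussian (EuclideanSpace ℝ ι)) :=
    ⟨by fun_prop, by rw [IsGaussian.map_eq_gaussianReal, integral_strongDual_stdGaussian,
      variance_dual_stdGaussian, hnorm]⟩
  refine (hL.comp hstd).congr (ae_of_all _ fun ω => ?_)
  simp [L, EuclideanSpace.inner_toLp_toLp, dotProduct_comm]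

end GaussianMoments

section Projection

variable {k m p r : ℕ} {Φ : Matrix (Fin m) (Fin p) ℝ}

lemma sqnorm_eq_dotProduct (u : Fin k → ℝ) : sqnorm u = u ⬝ᵥ u := by
  simp only [sqnorm, dotProduct, sq]

lemma sqnorm_nonneg (u : Fin k → ℝ) : 0 ≤ sqnorm u :=
  Finset.sum_nonneg fun _ _ => sq_nonneg _

lemma sqnorm_add (u w : Fin k → ℝ) : sqnorm (u + w) = sqnorm u + 2 * (u ⬝ᵥ w) + sqnorm w := by
  simp only [sqnorm_eq_dotProduct, add_dotProduct, dotProduct_add, dotProduct_comm w u]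
  ring

lemma sqnorm_sub_le_two_mul (u w f : Fin k → ℝ) :
    sqnorm (u - w) ≤ 2 * sqnorm (u - f) + 2 * sqnorm (w - f) := by
  simp only [sqnorm, Finset.mul_sum, ← Finset.sum_add_distrib, Pi.sub_apply]
  refine Finset.sum_le_sum fun i _ => ?_
  linarith [sq_nonneg (u i - f i + (w i - f i))]

lemma sqnorm_sub_sub_sqnorm_sub (z f u w : Fin k → ℝ) :
    sqnorm (z - u) - sqnorm (z - w) =
      sqnorm (u - f) - sqnorm (w - f) - 2 * ((z - f) ⬝ᵥ (u - w)) := by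
  simp only [sqnorm, dotProduct, Finset.mul_sum, ← Finset.sum_sub_distrib, Pi.sub_apply]
  exact Finset.sum_congr rfl fun i _ => by ring

lemma IsProjOnto.sqnorm_sub_mulVec_self_le {M : Finset (Fin p)} {H : Matrix (Fin m) (Fin m) ℝ}
    (hH : IsProjOnto Φ M H) (z g : Fin m → ℝ) :
    sqnorm (z - H *ᵥ z) ≤ sqnorm (z - H *ᵥ g) := by
  have hortho (u : Fin m → ℝ) : (z - H *ᵥ z) ⬝ᵥ H *ᵥ u = 0 := by
    have hsymm : H *ᵥ z = z ᵥ* H := by rw [← mulVec_transpose, hH.1.eq]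
    rw [sub_dotProduct, hsymm, ← dotProduct_mulVec, mulVec_mulVec, hH.2.1, sub_self]
  have hsplit : z - H *ᵥ g = (z - H *ᵥ z) + H *ᵥ (z - g) := by
    rw [mulVec_sub]
    abel
  rw [hsplit, sqnorm_add, hortho]
  linarith [sqnorm_nonneg (H *ᵥ (z - g))]

lemma IsProjOnto.exists_mulVec_eq {M : Finset (Fin p)} {H : Matrix (Fin m) (Fin m) ℝ}
    (hH : IsProjOnto Φ M H) (z : Fin m → ℝ) :
    ∃ x : Fin p → ℝ, (∀ j ∉ M, x j = 0) ∧ H *ᵥ z = Φ *ᵥ x := by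
  have hmem : H *ᵥ z ∈ Submodule.span ℝ (colv Φ '' (M : Set (Fin p))) :=
    hH.2.2 ▸ LinearMap.mem_range_self H.mulVecLin z
  obtain ⟨c, hc⟩ := Submodule.mem_span_image_finset_iff_exists_fun' ℝ |>.1 hmem
  refine ⟨fun j => if j ∈ M then c j else 0, fun j hj => if_neg hj, ?_⟩
  rw [← hc]
  ext i
  simp [mulVec, dotProduct, colv, mul_comm]

lemma sparse_of_eq_zero_off_union {M N : Finset (Fin p)} (hM : 2 * #M ≤ r) (hN : 2 * #N ≤ r)
    {x : Fin p → ℝ} (hx : ∀ j ∉ M ∪ N, x j = 0) : sparse r x := by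
  have hsupp : Function.support x ⊆ ((M ∪ N : Finset (Fin p)) : Set (Fin p)) :=
    Function.support_subset_iff'.2 fun j hj => hx j (by simpa using hj)
  have hcard := Set.ncard_le_ncard hsupp (Finset.finite_toSet _)
  rw [Set.ncard_coe_finset] at hcard
  have hunion := Finset.card_union_le M N
  unfold sparse
  omega

lemma dotProduct_mulVec_eq_sum_of_eq_zero_off {M : Finset (Fin p)} {x : Fin p → ℝ}
    (hx : ∀ j ∉ M, x j = 0) (η : Fin m → ℝ) :
    η ⬝ᵥ Φ *ᵥ x = ∑ j ∈ M, x j * (η ⬝ᵥ colv Φ j) := by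
  rw [Finset.sum_subset (Finset.subset_univ M) fun j _ hj => by rw [hx j hj, zero_mul],
    dotProduct_mulVec, dotProduct]
  exact Finset.sum_congr rfl fun j _ => mul_comm _ _

lemma two_mul_dotProduct_mulVec_le {M : Finset (Fin p)} {x : Fin p → ℝ}
    (hx : ∀ j ∉ M, x j = 0) (η : Fin m → ℝ) {b : ℝ} (hb : 0 < b) :
    2 * (η ⬝ᵥ Φ *ᵥ x) ≤ b * sqnorm x + b⁻¹ * ∑ j ∈ M, (η ⬝ᵥ colv Φ j) ^ 2 := by
  have hyoung (s t : ℝ) : 2 * (s * t) ≤ b * s ^ 2 + b⁻¹ * t ^ 2 := by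
    have hsq : b * s ^ 2 + b⁻¹ * t ^ 2 - 2 * (s * t) = b⁻¹ * (b * s - t) ^ 2 := by
      field_simp
      ring
    have : 0 ≤ b⁻¹ * (b * s - t) ^ 2 := by positivity
    linarith
  have hsqnorm : ∑ j ∈ M, x j ^ 2 ≤ sqnorm x :=
    Finset.sum_le_univ_sum_of_nonneg fun _ => sq_nonneg _
  calc 2 * (η ⬝ᵥ Φ *ᵥ x)
      = ∑ j ∈ M, 2 * (x j * (η ⬝ᵥ colv Φ j)) := by
        rw [dotProduct_mulVec_eq_sum_of_eq_zero_off hx, Finset.mul_sum]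
    _ ≤ ∑ j ∈ M, (b * x j ^ 2 + b⁻¹ * (η ⬝ᵥ colv Φ j) ^ 2) :=
        Finset.sum_le_sum fun j _ => hyoung _ _
    _ = b * ∑ j ∈ M, x j ^ 2 + b⁻¹ * ∑ j ∈ M, (η ⬝ᵥ colv Φ j) ^ 2 := by
        rw [Finset.sum_add_distrib, Finset.mul_sum, Finset.mul_sum]
    _ ≤ b * sqnorm x + b⁻¹ * ∑ j ∈ M, (η ⬝ᵥ colv Φ j) ^ 2 := by gcongr

variable {ν2 : ℝ} {M N : Finset (Fin p)} {H_M H_N : Matrix (Fin m) (Fin m) ℝ}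

lemma IsProjOnto.exists_mulVec_eq_sub
    (hν2min : ∀ x : Fin p → ℝ, x ≠ 0 → sparse r x → ν2 * sqnorm x ≤ sqnorm (Φ *ᵥ x))
    (hH_M : IsProjOnto Φ M H_M) (hH_N : IsProjOnto Φ N H_N) (hM : 2 * #M ≤ r) (hN : 2 * #N ≤ r)
    (z f : Fin m → ℝ) :
    ∃ x : Fin p → ℝ, (∀ j ∉ N ∪ M, x j = 0) ∧ H_N *ᵥ z - H_M *ᵥ f = Φ *ᵥ x ∧
      ν2 * sqnorm x ≤ sqnorm (Φ *ᵥ x) := by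
  obtain ⟨s, hs, hΦs⟩ := hH_N.exists_mulVec_eq z
  obtain ⟨t, ht, hΦt⟩ := hH_M.exists_mulVec_eq f
  have hoff : ∀ j ∉ N ∪ M, (s - t) j = 0 := fun j hj => by
    rw [Finset.mem_union, not_or] at hj
    rw [Pi.sub_apply, hs j hj.1, ht j hj.2, sub_zero]
  refine ⟨s - t, hoff, by rw [mulVec_sub, hΦs, hΦt], ?_⟩
  rcases eq_or_ne (s - t) 0 with hzero | hne
  · rw [hzero, mulVec_zero]
    simp [sqnorm]
  · exact hν2min _ hne (sparse_of_eq_zero_off_union hN hM hoff)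

lemma two_mul_dotProduct_sub_mulVec_le {a : ℝ} (ha : 0 < a) (hν2 : 0 < ν2)
    (hν2min : ∀ x : Fin p → ℝ, x ≠ 0 → sparse r x → ν2 * sqnorm x ≤ sqnorm (Φ *ᵥ x))
    (hH_M : IsProjOnto Φ M H_M) (hH_N : IsProjOnto Φ N H_N) (hM : 2 * #M ≤ r) (hN : 2 * #N ≤ r)
    (η z f : Fin m → ℝ) :
    2 * (η ⬝ᵥ (H_N *ᵥ z - H_M *ᵥ f)) ≤ a * sqnorm (H_N *ᵥ z - f) + a * sqnorm (H_M *ᵥ f - f) +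
      2 / (a * ν2) * (∑ j ∈ N, (η ⬝ᵥ colv Φ j) ^ 2 + ∑ j ∈ M, (η ⬝ᵥ colv Φ j) ^ 2) := by
  obtain ⟨x, hoff, hΦx, hν⟩ := hH_M.exists_mulVec_eq_sub hν2min hH_N hM hN z f
  have htri := sqnorm_sub_le_two_mul (H_N *ᵥ z) (H_M *ᵥ f) f
  rw [hΦx] at htri ⊢
  have hunion : ∑ j ∈ N ∪ M, (η ⬝ᵥ colv Φ j) ^ 2 ≤
      ∑ j ∈ N, (η ⬝ᵥ colv Φ j) ^ 2 + ∑ j ∈ M, (η ⬝ᵥ colv Φ j) ^ 2 := by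
    rw [← Finset.sum_union_inter]
    exact le_add_of_nonneg_right (Finset.sum_nonneg fun _ _ => sq_nonneg _)
  calc 2 * (η ⬝ᵥ Φ *ᵥ x)
      ≤ a * ν2 / 2 * sqnorm x + (a * ν2 / 2)⁻¹ * ∑ j ∈ N ∪ M, (η ⬝ᵥ colv Φ j) ^ 2 :=
        two_mul_dotProduct_mulVec_le hoff η (by positivity)
    _ = a / 2 * (ν2 * sqnorm x) + 2 / (a * ν2) * ∑ j ∈ N ∪ M, (η ⬝ᵥ colv Φ j) ^ 2 := by
        rw [inv_div]
        ring
    _ ≤ a / 2 * (2 * sqnorm (H_N *ᵥ z - f) + 2 * sqnorm (H_M *ᵥ f - f)) +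
          2 / (a * ν2) *
            (∑ j ∈ N, (η ⬝ᵥ colv Φ j) ^ 2 + ∑ j ∈ M, (η ⬝ᵥ colv Φ j) ^ 2) := by
        gcongr
        exact hν.trans htri
    _ = _ := by ring

lemma one_sub_mul_sqnorm_mulVec_sub_le {a : ℝ} (ha : 0 < a) (hν2 : 0 < ν2)
    (hν2min : ∀ x : Fin p → ℝ, x ≠ 0 → sparse r x → ν2 * sqnorm x ≤ sqnorm (Φ *ᵥ x))
    (hH_M : IsProjOnto Φ M H_M) (hH_N : IsProjOnto Φ N H_N) (hM : 2 * #M ≤ r) (hN : 2 * #N ≤ r)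
    {z : Fin m → ℝ} (f : Fin m → ℝ) {pen_M pen_N : ℝ}
    (hmin : sqnorm (z - H_N *ᵥ z) + pen_N ≤ sqnorm (z - H_M *ᵥ z) + pen_M) :
    (1 - a) * sqnorm (H_N *ᵥ z - f) ≤ (1 + a) * sqnorm (H_M *ᵥ f - f) + pen_M - pen_N +
      2 / (a * ν2) *
        (∑ j ∈ N, ((z - f) ⬝ᵥ colv Φ j) ^ 2 + ∑ j ∈ M, ((z - f) ⬝ᵥ colv Φ j) ^ 2) := by
  have hproj := hH_M.sqnorm_sub_mulVec_self_le z f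
  have hexpand := sqnorm_sub_sub_sqnorm_sub z f (H_N *ᵥ z) (H_M *ᵥ f)
  have hnoise := two_mul_dotProduct_sub_mulVec_le ha hν2 hν2min hH_M hH_N hM hN (z - f) z f
  linarith

end Projection

section NoiseExcess

variable {ι : Type*}

/-- The noise in the oracle inequality for the model `M` that no penalty offsets, in terms of the
noise coefficients `x j` with variances `v j`: the excesses of `x j ^ 2` over the level `v j * T`,
summed over all the indices `J` a selected model may use, and the full squares over `M`. -/
def noiseExcess (J M : Finset ι) (v : ι → NNReal) (T : ℝ) (x : ι → ℝ) : ℝ :=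
  ∑ j ∈ J, max (x j ^ 2 - v j * T) 0 + ∑ j ∈ M, x j ^ 2

lemma sum_sq_add_sum_sq_le_noiseExcess {J M N : Finset ι} (hNJ : N ⊆ J) (v : ι → NNReal)
    (T : ℝ) (x : ι → ℝ) :
    ∑ j ∈ N, x j ^ 2 + ∑ j ∈ M, x j ^ 2 ≤ T * ∑ j ∈ N, (v j : ℝ) + noiseExcess J M v T x := by
  have hN : ∑ j ∈ N, x j ^ 2 ≤ T * ∑ j ∈ N, (v j : ℝ) + ∑ j ∈ N, max (x j ^ 2 - v j * T) 0 := by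
    rw [Finset.mul_sum, ← Finset.sum_add_distrib]
    exact Finset.sum_le_sum fun j _ => by linarith [le_max_left (x j ^ 2 - v j * T) 0]
  have hJ : ∑ j ∈ N, max (x j ^ 2 - v j * T) 0 ≤ ∑ j ∈ J, max (x j ^ 2 - v j * T) 0 :=
    Finset.sum_le_sum_of_subset_of_nonneg hNJ fun _ _ _ => le_max_right _ _
  unfold noiseExcess
  linarith

variable {Ω : Type*} [MeasurableSpace Ω] {μ : Measure Ω} [IsFiniteMeasure μ]
  {X : Ω → ι → ℝ} {v : ι → NNReal}

lemma integrable_max_sq_sub (hX : ∀ j, HasLaw (X · j) (gaussianReal 0 (v j)) μ) (T : ℝ) (j : ι) :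
    Integrable (fun ω => max (X ω j ^ 2 - v j * T) 0) μ :=
  ((integrable_sq_of_hasLaw_gaussianReal (hX j)).sub (integrable_const _)).pos_part

lemma integrable_noiseExcess (hX : ∀ j, HasLaw (X · j) (gaussianReal 0 (v j)) μ)
    (J M : Finset ι) (T : ℝ) : Integrable (fun ω => noiseExcess J M v T (X ω)) μ :=
  (integrable_finsetSum _ fun j _ => integrable_max_sq_sub hX T j).add
    (integrable_finsetSum _ fun j _ => integrable_sq_of_hasLaw_gaussianReal (hX j))

lemma integral_noiseExcess_le (hX : ∀ j, HasLaw (X · j) (gaussianReal 0 (v j)) μ)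
    (J M : Finset ι) {T : ℝ} (hT : 0 < T) :
    ∫ ω, noiseExcess J M v T (X ω) ∂μ ≤
      (∑ j ∈ J, (v j : ℝ)) * (4 / √(2 * Real.pi * T) * Real.exp (-(T / 2))) +
        ∑ j ∈ M, (v j : ℝ) := by
  have hsq (j : ι) := integrable_sq_of_hasLaw_gaussianReal (hX j)
  have hmax (j : ι) := integrable_max_sq_sub hX T j
  simp only [noiseExcess]
  rw [integral_add (integrable_finsetSum _ fun j _ => hmax j)
      (integrable_finsetSum _ fun j _ => hsq j),
    integral_finsetSum _ fun j _ => hmax j, integral_finsetSum _ fun j _ => hsq j,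
    Finset.sum_mul]
  gcongr with j _ j _
  · exact integral_max_sq_sub_of_hasLaw_gaussianReal_le (hX j) hT
  · exact (integral_sq_of_hasLaw_gaussianReal (hX j)).le

lemma four_div_sqrt_two_mul_pi_mul_le {T : ℝ} (hT : 4 / 3 ≤ T) :
    4 / √(2 * Real.pi * T) ≤ 3 / 2 := by
  have hsqrt : 8 / 3 ≤ √(2 * Real.pi * T) :=
    Real.le_sqrt_of_sq_le (by nlinarith [Real.pi_gt_three])
  rw [div_le_iff₀ (by linarith)]
  linarith

lemma integral_noiseExcess_le_add_exp (hX : ∀ j, HasLaw (X · j) (gaussianReal 0 (v j)) μ)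
    {J M : Finset ι} {V T : ℝ} {p : ℕ} (hp : 2 ≤ p) (hJ : #J ≤ p) (hvJ : ∀ j ∈ J, (v j : ℝ) ≤ V)
    (hvM : ∑ j ∈ M, (v j : ℝ) ≤ V) (hT : 4 / 3 ≤ T) :
    ∫ ω, noiseExcess J M v T (X ω) ∂μ ≤
      T / 2 * ∑ j ∈ M, (v j : ℝ) + 2 * V * (p * Real.exp (-(T / 2))) := by
  have hM0 : 0 ≤ ∑ j ∈ M, (v j : ℝ) := Finset.sum_nonneg fun _ _ => NNReal.coe_nonneg _
  have hV0 : 0 ≤ V := hM0.trans hvM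
  have hp' : (2 : ℝ) ≤ p := by exact_mod_cast hp
  have hsumJ : ∑ j ∈ J, (v j : ℝ) ≤ p * V :=
    calc ∑ j ∈ J, (v j : ℝ) ≤ #J * V := by
          simpa only [nsmul_eq_mul] using Finset.sum_le_card_nsmul J _ V hvJ
      _ ≤ p * V := by gcongr
  have htail := mul_le_mul hsumJ (mul_le_mul_of_nonneg_right (four_div_sqrt_two_mul_pi_mul_le hT)
    (Real.exp_pos (-(T / 2))).le) (by positivity) (by positivity)
  -- `T / 2` may be below `1`; the missing `1 - T / 2 ≤ exp (-T / 2)` is part of the remainder.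
  have hslack : (∑ j ∈ M, (v j : ℝ)) * (1 - T / 2) ≤ V * (p / 2 * Real.exp (-(T / 2))) :=
    calc (∑ j ∈ M, (v j : ℝ)) * (1 - T / 2)
        ≤ (∑ j ∈ M, (v j : ℝ)) * Real.exp (-(T / 2)) := by
          gcongr
          linarith [Real.add_one_le_exp (-(T / 2))]
      _ ≤ V * (p / 2 * Real.exp (-(T / 2))) := by
          gcongr
          exact le_mul_of_one_le_left (Real.exp_pos _).le (by linarith)
  linarith [integral_noiseExcess_le hX J M (show 0 < T by linarith)]

end NoiseExcess

lemma four_thirds_le_two_mul_add_one_mul_log {δ : ℝ} (hδ : 0 ≤ δ) {p : ℕ} (hp : 2 ≤ p) :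
    4 / 3 ≤ 2 * (δ + 1) * Real.log p := by
  have hlog : Real.log 2 ≤ Real.log p := Real.log_le_log two_pos (by exact_mod_cast hp)
  have hlog_two := Real.log_two_gt_d9
  nlinarith

lemma mul_exp_neg_add_one_mul_log {x : ℝ} (hx : 0 < x) (δ : ℝ) :
    x * Real.exp (-((δ + 1) * Real.log x)) = x ^ (-δ) := by
  rw [Real.rpow_def_of_pos hx]
  nth_rewrite 1 [← Real.exp_log hx]
  rw [← Real.exp_add]
  ring_nf

lemma integral_noiseExcess_biUnion_le {p : ℕ} (hp : 2 ≤ p) {δ V : ℝ} (hδ : 0 ≤ δ)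
    {v : Fin p → NNReal} {C : Finset (Finset (Fin p))}
    (hCvar : ∀ M ∈ C, ∑ j ∈ M, (v j : ℝ) ≤ V) {Ω : Type*} [MeasurableSpace Ω] {μ : Measure Ω}
    [IsFiniteMeasure μ] {X : Ω → Fin p → ℝ}
    (hX : ∀ j, HasLaw (X · j) (gaussianReal 0 (v j)) μ) {M : Finset (Fin p)} (hM : M ∈ C) :
    ∫ ω, noiseExcess (C.biUnion id) M v (2 * (δ + 1) * Real.log p) (X ω) ∂μ ≤
      (δ + 1) * Real.log p * ∑ j ∈ M, (v j : ℝ) + 2 * V * (p : ℝ) ^ (-δ) := by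
  have hvar_le : ∀ j ∈ C.biUnion id, (v j : ℝ) ≤ V := fun j hj => by
    obtain ⟨N, hN, hjN⟩ := Finset.mem_biUnion.1 hj
    exact (Finset.single_le_sum (fun i _ => (v i).coe_nonneg) hjN).trans (hCvar N hN)
  have hhalf : 2 * (δ + 1) * Real.log p / 2 = (δ + 1) * Real.log p := by ring
  have hnoise := integral_noiseExcess_le_add_exp hX hp (card_finset_fin_le _) hvar_le
    (hCvar M hM) (four_thirds_le_two_mul_add_one_mul_log hδ hp)
  rwa [hhalf, mul_exp_neg_add_one_mul_log (by positivity)] at hnoise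

lemma sqnorm_selected_sub_le_noiseExcess {m p r : ℕ} {Φ : Matrix (Fin m) (Fin p) ℝ} {a ν2 T : ℝ}
    (ha0 : 0 < a) (ha1 : a < 1) (hν2 : 0 < ν2)
    (hν2min : ∀ x : Fin p → ℝ, x ≠ 0 → sparse r x → ν2 * sqnorm x ≤ sqnorm (Φ *ᵥ x))
    {M N J : Finset (Fin p)} {H_M H_N : Matrix (Fin m) (Fin m) ℝ}
    (hH_M : IsProjOnto Φ M H_M) (hH_N : IsProjOnto Φ N H_N) (hM : 2 * #M ≤ r) (hN : 2 * #N ≤ r)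
    (hNJ : N ⊆ J) {z : Fin m → ℝ} (f : Fin m → ℝ) {v : Fin p → NNReal} {pen_M pen_N : ℝ}
    (hpen : 2 / (a * ν2) * (T * ∑ j ∈ N, (v j : ℝ)) ≤ pen_N)
    (hmin : sqnorm (z - H_N *ᵥ z) + pen_N ≤ sqnorm (z - H_M *ᵥ z) + pen_M) :
    sqnorm (H_N *ᵥ z - f) ≤ (1 - a)⁻¹ * ((1 + a) * sqnorm (H_M *ᵥ f - f) + pen_M +
      2 / (a * ν2) * noiseExcess J M v T (fun j => (z - f) ⬝ᵥ colv Φ j)) := by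
  have horacle := one_sub_mul_sqnorm_mulVec_sub_le ha0 hν2 hν2min hH_M hH_N hM hN f hmin
  have hexcess := mul_le_mul_of_nonneg_left
    (sum_sq_add_sum_sq_le_noiseExcess (M := M) hNJ v T (fun j => (z - f) ⬝ᵥ colv Φ j))
    (by positivity : 0 ≤ 2 / (a * ν2))
  rw [inv_mul_eq_div, le_div_iff₀ (sub_pos.2 ha1)]
  linarith

theorem oracle_model_selection_expectation_general
    {m p r : ℕ} (hp : 2 ≤ p) {Φ : Matrix (Fin m) (Fin p) ℝ} {δ a ν2 V : ℝ} (hδ : 0 ≤ δ)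
    (ha0 : 0 < a) (ha1 : a < 1) (hν2 : 0 < ν2)
    (hν2min : ∀ x : Fin p → ℝ, x ≠ 0 → sparse r x → ν2 * sqnorm x ≤ sqnorm (Φ *ᵥ x))
    {v : Fin p → NNReal} {C : Finset (Finset (Fin p))} (hCcard : ∀ M ∈ C, 2 * #M ≤ r)
    (hCvar : ∀ M ∈ C, ∑ j ∈ M, (v j : ℝ) ≤ V)
    {H : Finset (Fin p) → Matrix (Fin m) (Fin m) ℝ} (hH : ∀ M ∈ C, IsProjOnto Φ M (H M))
    {Ω : Type*} [MeasurableSpace Ω] {μ : Measure Ω} [IsProbabilityMeasure μ]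
    {z : Ω → Fin m → ℝ} {f : Fin m → ℝ}
    (hz : ∀ j, HasLaw (fun ω => (z ω - f) ⬝ᵥ colv Φ j) (gaussianReal 0 (v j)) μ)
    {Pen : Finset (Fin p) → ℝ}
    (hPen : ∀ M ∈ C, 4 * (δ + 1) / (a * ν2) * (∑ j ∈ M, (v j : ℝ)) * Real.log p ≤ Pen M)
    {Mhat : Ω → Finset (Fin p)} (hMhatMem : ∀ ω, Mhat ω ∈ C)
    (hMhatMin : ∀ ω, ∀ M ∈ C,
      sqnorm (z ω - H (Mhat ω) *ᵥ z ω) + Pen (Mhat ω) ≤ sqnorm (z ω - H M *ᵥ z ω) + Pen M)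
    (hmeas : AEStronglyMeasurable (fun ω => sqnorm (H (Mhat ω) *ᵥ z ω - f)) μ)
    {M : Finset (Fin p)} (hM : M ∈ C) :
    Integrable (fun ω => sqnorm (H (Mhat ω) *ᵥ z ω - f)) μ ∧
      ∫ ω, sqnorm (H (Mhat ω) *ᵥ z ω - f) ∂μ ≤
        (1 + a) / (1 - a) * (sqnorm (H M *ᵥ f - f) + 3 / (2 * (1 + a)) * Pen M) +
          4 * V / (a * (1 - a) * ν2) * (p : ℝ) ^ (-δ) := by
  set T : ℝ := 2 * (δ + 1) * Real.log p
  set J : Finset (Fin p) := C.biUnion id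
  set X : Ω → Fin p → ℝ := fun ω j => (z ω - f) ⬝ᵥ colv Φ j
  set bound : Ω → ℝ := fun ω => (1 - a)⁻¹ * ((1 + a) * sqnorm (H M *ᵥ f - f) + Pen M +
    2 / (a * ν2) * noiseExcess J M v T (X ω))
  have hPenT : ∀ N ∈ C, 2 / (a * ν2) * (T * ∑ j ∈ N, (v j : ℝ)) ≤ Pen N := fun N hN =>
    (hPen N hN).trans_eq' (by ring)
  have hpointwise (ω : Ω) : sqnorm (H (Mhat ω) *ᵥ z ω - f) ≤ bound ω :=
    sqnorm_selected_sub_le_noiseExcess ha0 ha1 hν2 hν2min (hH M hM) (hH _ (hMhatMem ω))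
      (hCcard M hM) (hCcard _ (hMhatMem ω)) (Finset.subset_biUnion_of_mem id (hMhatMem ω)) f
      (hPenT _ (hMhatMem ω)) (hMhatMin ω M hM)
  have hexcess : Integrable (fun ω => 2 / (a * ν2) * noiseExcess J M v T (X ω)) μ :=
    (integrable_noiseExcess hz J M T).const_mul _
  have hbound : Integrable bound μ := ((integrable_const _).add hexcess).const_mul _
  have hnoise : ∫ ω, noiseExcess J M v T (X ω) ∂μ ≤
      (δ + 1) * Real.log p * ∑ j ∈ M, (v j : ℝ) + 2 * V * (p : ℝ) ^ (-δ) :=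
    integral_noiseExcess_biUnion_le hp hδ hCvar hz hM
  have hPenM : 2 / (a * ν2) * ((δ + 1) * Real.log p * ∑ j ∈ M, (v j : ℝ)) ≤ 1 / 2 * Pen M :=
    (mul_le_mul_of_nonneg_left (hPen M hM) one_half_pos.le).trans_eq' (by ring)
  have h1a : 0 < 1 - a := sub_pos.2 ha1
  refine ⟨hbound.mono' hmeas (ae_of_all _ fun ω => ?_), ?_⟩
  · rw [Real.norm_of_nonneg (sqnorm_nonneg _)]
    exact hpointwise ω
  calc ∫ ω, sqnorm (H (Mhat ω) *ᵥ z ω - f) ∂μ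
      ≤ ∫ ω, bound ω ∂μ :=
        integral_mono_of_nonneg (ae_of_all _ fun _ => sqnorm_nonneg _) hbound
          (ae_of_all _ hpointwise)
    _ = (1 - a)⁻¹ * ((1 + a) * sqnorm (H M *ᵥ f - f) + Pen M +
          2 / (a * ν2) * ∫ ω, noiseExcess J M v T (X ω) ∂μ) := by
        rw [integral_const_mul, integral_add (integrable_const _) hexcess, integral_const_mul]
        simp
    _ ≤ (1 - a)⁻¹ * ((1 + a) * sqnorm (H M *ᵥ f - f) + Pen M +
          (1 / 2 * Pen M + 2 / (a * ν2) * (2 * V * (p : ℝ) ^ (-δ)))) := by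
        gcongr
        linarith [mul_le_mul_of_nonneg_left hnoise (by positivity : 0 ≤ 2 / (a * ν2))]
    _ = _ := by
        field_simp
        ring

section LinearModel

variable {n m p : ℕ}

/-- The variance `σ² ‖ψ_j‖²` of the noise coefficient `⟨z - f, φ_j⟩` in the model
`y = A f + σ ε`. -/
def noiseVar (A : Matrix (Fin n) (Fin m) ℝ) (Φ : Matrix (Fin m) (Fin p) ℝ) (σ : ℝ) (j : Fin p) :
    NNReal :=
  ⟨σ ^ 2 * sqnorm (colv (Psi A Φ) j), mul_nonneg (sq_nonneg σ) (sqnorm_nonneg _)⟩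

lemma frob2_restr (B : Matrix (Fin n) (Fin p) ℝ) (M : Finset (Fin p)) :
    frob2 (restr B M) = ∑ j ∈ M, sqnorm (colv B j) := by
  have hcol (j : Fin p) : sqnorm (colv (restr B M) j) = if j ∈ M then sqnorm (colv B j) else 0 := by
    by_cases hj : j ∈ M <;> simp [sqnorm, colv, restr, hj]
  simp [frob2, hcol]

lemma sum_noiseVar (A : Matrix (Fin n) (Fin m) ℝ) (Φ : Matrix (Fin m) (Fin p) ℝ) (σ : ℝ)
    (M : Finset (Fin p)) :
    ∑ j ∈ M, (noiseVar A Φ σ j : ℝ) = σ ^ 2 * frob2 (restr (Psi A Φ) M) := by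
  rw [frob2_restr, Finset.mul_sum]
  rfl

lemma isUnit_det_transpose_mul_self {A : Matrix (Fin n) (Fin m) ℝ} (hrank : A.rank = m) :
    IsUnit (Aᵀ * A).det := by
  rw [← Matrix.isUnit_iff_isUnit_det, ← Matrix.mulVec_surjective_iff_isUnit]
  have hrange : LinearMap.range (Aᵀ * A).mulVecLin = ⊤ := by
    apply Submodule.eq_top_of_finrank_eq
    rw [← Matrix.rank, rank_transpose_mul_self, hrank, Module.finrank_fin_fun]
  exact LinearMap.range_eq_top.1 hrange

lemma zv_sub {A : Matrix (Fin n) (Fin m) ℝ} (hrank : A.rank = m) (f : Fin m → ℝ) (σ : ℝ)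
    (e : Fin n → ℝ) : zv A f σ e - f = σ • xiv A e := by
  rw [zv, xiv, mulVec_add, mulVec_mulVec, mulVec_smul, Matrix.mul_assoc,
    Matrix.nonsing_inv_mul _ (isUnit_det_transpose_mul_self hrank), one_mulVec, add_sub_cancel_left]

lemma xiv_dotProduct_colv (A : Matrix (Fin n) (Fin m) ℝ) (Φ : Matrix (Fin m) (Fin p) ℝ)
    (e : Fin n → ℝ) (j : Fin p) : xiv A e ⬝ᵥ colv Φ j = colv (Psi A Φ) j ⬝ᵥ e := by
  have hcol : colv (Psi A Φ) j = (A * (Aᵀ * A)⁻¹) *ᵥ colv Φ j := rfl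
  have htranspose : (Aᵀ * A)⁻¹ * Aᵀ = (A * (Aᵀ * A)⁻¹)ᵀ := by
    rw [transpose_mul, transpose_nonsing_inv, transpose_mul, transpose_transpose]
  rw [hcol, xiv, htranspose, mulVec_transpose, ← dotProduct_mulVec, dotProduct_comm]

lemma hasLaw_zv_sub_dotProduct_colv {A : Matrix (Fin n) (Fin m) ℝ} (hrank : A.rank = m)
    (Φ : Matrix (Fin m) (Fin p) ℝ) (σ : ℝ) (f : Fin m → ℝ) {Ω : Type*} [MeasurableSpace Ω]
    {μ : Measure Ω} {ε : Ω → Fin n → ℝ}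
    (hε : HasLaw ε (Measure.pi fun _ => gaussianReal 0 1) μ) (j : Fin p) :
    HasLaw (fun ω => (zv A f σ (ε ω) - f) ⬝ᵥ colv Φ j) (gaussianReal 0 (noiseVar A Φ σ j)) μ := by
  have hvar : ((σ • colv (Psi A Φ) j) ⬝ᵥ (σ • colv (Psi A Φ) j)).toNNReal = noiseVar A Φ σ j := by
    rw [smul_dotProduct, dotProduct_smul, ← sqnorm_eq_dotProduct, smul_smul, smul_eq_mul, ← sq]
    exact Real.toNNReal_coe (r := noiseVar A Φ σ j)
  rw [← hvar]
  simpa only [zv_sub hrank, smul_dotProduct, xiv_dotProduct_colv] using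
    hasLaw_dotProduct_of_hasLaw_pi_gaussianReal hε (σ • colv (Psi A Φ) j)

lemma mem_modelsG {r : ℕ} {A : Matrix (Fin n) (Fin m) ℝ} {Φ : Matrix (Fin m) (Fin p) ℝ} {γ : ℝ}
    {M : Finset (Fin p)} :
    M ∈ modelsG r A Φ γ ↔ M ∈ models p r ∧ frob2 (restr (Psi A Φ) M) ≤ γ ^ 2 * n := by
  simp [modelsG, models]

end LinearModel

/-- Theorem 1, part 2 (oracle inequality in expectation for the penalized empirical
risk model-selection estimator over the restricted collection `𝓜_γ`). -/
theorem oracle_model_selection_expectation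
    {n m p r : ℕ} (hp : 2 ≤ p) (hmn : m ≤ n)
    (A : Matrix (Fin n) (Fin m) ℝ) (hrank : A.rank = m)
    (Φ : Matrix (Fin m) (Fin p) ℝ) (hΦnorm : ∀ j, sqnorm (colv Φ j) = 1)
    (σ : ℝ) (hσ : 0 < σ) (δ : ℝ) (hδ : 0 < δ) (a : ℝ) (ha0 : 0 < a) (ha1 : a < 1)
    (γ : ℝ) (hγ : 0 < γ)
    (ν2 : ℝ) (hν2 : 0 < ν2)
    (hν2min : ∀ x : Fin p → ℝ, x ≠ 0 → sparse r x → ν2 * sqnorm x ≤ sqnorm (Φ.mulVec x))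
    (H : Finset (Fin p) → Matrix (Fin m) (Fin m) ℝ)
    (hH : ∀ M : Finset (Fin p), IsProjOnto Φ M (H M))
    {Ω : Type*} [MeasurableSpace Ω] (μ : Measure Ω) [IsProbabilityMeasure μ]
    (ε : Ω → Fin n → ℝ) (hεmeas : Measurable ε)
    (hεdist : Measure.map ε μ = Measure.pi fun _ : Fin n => gaussianReal 0 1)
    (f : Fin m → ℝ)
    (Pen : Finset (Fin p) → ℝ)
    (hPen : ∀ M ∈ models p r,
      4 * σ ^ 2 * (δ + 1) / (a * ν2) * frob2 (restr (Psi A Φ) M) * Real.log p ≤ Pen M)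
    (Mhat : Ω → Finset (Fin p))
    (hMhatMem : ∀ ω, Mhat ω ∈ modelsG r A Φ γ)
    (hMhatMin : ∀ ω, ∀ M ∈ modelsG r A Φ γ,
      sqnorm (zv A f σ (ε ω) - (H (Mhat ω)).mulVec (zv A f σ (ε ω))) + Pen (Mhat ω) ≤
        sqnorm (zv A f σ (ε ω) - (H M).mulVec (zv A f σ (ε ω))) + Pen M)
    (hmeas : Measurable fun ω => sqnorm ((H (Mhat ω)).mulVec (zv A f σ (ε ω)) - f)) :
    ∀ M ∈ modelsG r A Φ γ,
      ∫ ω, sqnorm ((H (Mhat ω)).mulVec (zv A f σ (ε ω)) - f) ∂μ ≤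
        (1 + a) / (1 - a) *
          (sqnorm ((H M).mulVec f - f) + 3 / (2 * (1 + a)) * Pen M) +
        4 * γ ^ 2 * σ ^ 2 / (a * (1 - a) * ν2) * (n : ℝ) * (p : ℝ) ^ (-δ) := by
  intro M hM
  have hcard : ∀ N ∈ modelsG r A Φ γ, 2 * #N ≤ r := fun N hN =>
    (Finset.mem_filter.1 (mem_modelsG.1 hN).1).2
  have hvar : ∀ N ∈ modelsG r A Φ γ,
      ∑ j ∈ N, (noiseVar A Φ σ j : ℝ) ≤ σ ^ 2 * (γ ^ 2 * n) := fun N hN => by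
    rw [sum_noiseVar]
    exact mul_le_mul_of_nonneg_left (mem_modelsG.1 hN).2 (sq_nonneg σ)
  have hpen : ∀ N ∈ modelsG r A Φ γ,
      4 * (δ + 1) / (a * ν2) * (∑ j ∈ N, (noiseVar A Φ σ j : ℝ)) * Real.log p ≤ Pen N :=
    fun N hN => (hPen N (mem_modelsG.1 hN).1).trans_eq' (by rw [sum_noiseVar]; ring)
  exact (oracle_model_selection_expectation_general hp hδ.le ha0 ha1 hν2 hν2min hcard hvar
    (fun N _ => hH N) (hasLaw_zv_sub_dotProduct_colv hrank Φ σ f ⟨hεmeas.aemeasurable, hεdist⟩)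
    hpen hMhatMem hMhatMin hmeas.aestronglyMeasurable hM).2.trans_eq (by ring)
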